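/- The element Λ := δ_e ⊗ (1/|K|)Σ_{x∈K} x of Ξ(R,K), i.e. the function Λ(r,z) = 1/|K| if r = e and Λ(r,z) = 0 otherwise, is a normalised two-sided integral: a·Λ = ε(a)·Λ = Λ·a for every a ∈ Ξ(R,K), and ε(Λ) = 1, where ε : Ξ(R,K) → ℂ is the counit ε(a) := Σ_{x∈K} a(e,x). -/

import Mathlib

/-!
The point `e ∈ R` is fixed by the action of `K`, and no other point of `R` is moved to it:
`x▷r = e` iff `r = e` (`act_eq_one_iff`), since either condition places `r` in `K`, and `e` is the
only element of `R ∩ K`. Collapsing the convolution constraint `xy = z` to `y = x⁻¹z`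
(`Ximul_apply`), `a·Λ` is therefore supported on `r = e`, where it equals `Σ_x a(e,x)/|K|`, while
`Λ·a` at `(e,z)` is `Σ_x a(e,x⁻¹z)/|K|`, the same sum after the substitution `x ↦ x⁻¹z` in `K`.
-/

open scoped Classical

/-- The product of the boundary algebra `Ξ(R,K)` realised on functions `R × K → ℂ`:
`(a·b)(r,z) = Σ_{xy=z} a(r,x)·b(x⁻¹▷r, y)`. -/
noncomputable def Ximul {G : Type} [Group G] [Fintype G] {K : Subgroup G} {R : Set G}
    (act : K → R → R) (a b : R × K → ℂ) : R × K → ℂ :=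
  fun p => ∑ x : K, ∑ y : K,
    if x * y = p.2 then a (p.1, x) * b (act x⁻¹ p.1, y) else 0

theorem Ximul_apply {G : Type} [Group G] [Fintype G] {K : Subgroup G} {R : Set G}
    (act : K → R → R) (a b : R × K → ℂ) (r : R) (z : K) :
    Ximul act a b (r, z) = ∑ x : K, a (r, x) * b (act x⁻¹ r, x⁻¹ * z) := by
  unfold Ximul
  refine Finset.sum_congr rfl fun x _ => ?_
  simp only [← eq_inv_mul_iff_mul_eq]
  simp

theorem act_eq_one_iff {G : Type} [Group G] {K : Subgroup G} {R : Set G}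
    (heR : (1 : G) ∈ R)
    (huniq : ∀ (r r' : R) (x x' : K),
      (r : G) * (x : G) = (r' : G) * (x' : G) → r = r' ∧ x = x')
    (act : K → R → R) (coact : K → R → K)
    (hfac : ∀ (x : K) (r : R), (x : G) * (r : G) = (act x r : G) * (coact x r : G))
    (x : K) (r : R) : act x r = ⟨1, heR⟩ ↔ r = ⟨1, heR⟩ := by
  have h := hfac x r
  constructor
  · intro hr
    rw [hr] at h
    refine (huniq r ⟨1, heR⟩ 1 (x⁻¹ * coact x r) ?_).1
    simp only [one_mul] at h
    simp [← h]
  · rintro rfl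
    refine (huniq _ _ (coact x ⟨1, heR⟩) x ?_).1
    simpa using h.symm

/-- The element `Λ := δ_e ⊗ (1/|K|)Σ_{x∈K} x` of `Ξ(R,K)`, i.e. the
function `Λ(r,z) = 1/|K|` if `r = e` and `0` otherwise, is a normalised two-sided
integral: `a·Λ = ε(a)·Λ = Λ·a` for every `a ∈ Ξ(R,K)`, and `ε(Λ) = 1`, where
`ε(a) := Σ_{x∈K} a(e,x)` is the counit. -/
theorem statement19 {G : Type} [Group G] [Fintype G] (K : Subgroup G) (R : Set G)
    (heR : (1 : G) ∈ R)
    (huniq : ∀ (r r' : R) (x x' : K),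
      (r : G) * (x : G) = (r' : G) * (x' : G) → r = r' ∧ x = x')
    (act : K → R → R) (coact : K → R → K)
    (hfac : ∀ (x : K) (r : R), (x : G) * (r : G) = (act x r : G) * (coact x r : G)) :
    (∀ a : R × K → ℂ,
      Ximul act a
          (fun p => if p.1 = (⟨1, heR⟩ : R) then (Nat.card K : ℂ)⁻¹ else 0)
        = (∑ x : K, a (⟨1, heR⟩, x)) •
            (fun p => if p.1 = (⟨1, heR⟩ : R) then (Nat.card K : ℂ)⁻¹ else 0)) ∧
    (∀ a : R × K → ℂ,
      Ximul act
          (fun p => if p.1 = (⟨1, heR⟩ : R) then (Nat.card K : ℂ)⁻¹ else 0) a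
        = (∑ x : K, a (⟨1, heR⟩, x)) •
            (fun p => if p.1 = (⟨1, heR⟩ : R) then (Nat.card K : ℂ)⁻¹ else 0)) ∧
    ((∑ x : K, (fun p : R × K =>
        if p.1 = (⟨1, heR⟩ : R) then (Nat.card K : ℂ)⁻¹ else 0) (⟨1, heR⟩, x)) = 1) := by
  have key := act_eq_one_iff heR huniq act coact hfac
  refine ⟨fun a => ?_, fun a => ?_, ?_⟩
  · ext ⟨r, z⟩
    rw [Ximul_apply]
    simp only [key, Pi.smul_apply, smul_eq_mul]
    rw [← Finset.sum_mul]
    by_cases hr : r = ⟨1, heR⟩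
    · rw [hr]
    · simp [hr]
  · ext ⟨r, z⟩
    rw [Ximul_apply]
    simp only [Pi.smul_apply, smul_eq_mul]
    by_cases hr : r = ⟨1, heR⟩
    · have hact : ∀ x : K, act x⁻¹ r = ⟨1, heR⟩ := fun x => (key _ _).2 hr
      simp only [hact, if_pos hr]
      rw [← Finset.mul_sum, mul_comm]
      congr 1
      exact Equiv.sum_comp ((Equiv.inv K).trans (Equiv.mulRight z))
        (fun y => a (⟨1, heR⟩, y))
    · simp [hr]
  · simp [Nat.card_eq_fintype_card]
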